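/- arXiv:1804.00220 — 5 statements merged into one kernel-verified Lean document; each statement's English description precedes it below -/
import Mathlib

section
/- Let G and H be groups acting by homeomorphisms on connected topological manifolds M and N, and let (λ, φ) be a Morita morphism from G ⋉ M to H ⋉ N. Set K = ker λ. Then: (1) the restricted action of K on M is free; (2) the action of K on M is properly discontinuous: every x ∈ M has an open neighborhood U such that k•U ∩ U = ∅ for every k ∈ K with k ≠ e; (3) φ is surjective and the induced map φ̄ : M/K → N, K•x ↦ φ(x), is a homeomorphism from the orbit space of the K-action (with the quotient topology) onto N; (4) λ induces a group isomorphism λ̄ : G/K → H; (5) φ̄ is equivariant: φ̄(gK • (K•x)) = λ̄(gK) • φ̄(K•x) for all g ∈ G, x ∈ M. In other words, every Morita morphism factors as the quotient projection G ⋉ M → (G/K) ⋉ (M/K) followed by an isomorphism of action groupoids. -/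
/-!
The isotropy and orbit conditions together say that the functor of action groupoids is full: every
arrow `h : φ x → φ x'` lifts to an arrow `g : x → x'`. Lifting arrows over `1 : H` identifies the
fibres of `φ` with the orbits of `ker lam`; that this group acts freely is faithfulness.

Fullness also shows that any two `H`-translates of `range φ` are equal or disjoint. These translates
are open and cover `N`, so connectedness forces `range φ = N`, and lifting arrows once more yields
surjectivity of `lam`. Finally, `φ` is injective near each point, and points in one `ker lam`-orbit
have the same image, which gives proper discontinuity.
-/

open MulAction Topology

section GroupAction

open scoped Pointwise

theorem isClosed_of_isOpen_isBlock {G X : Type*} [Group G] [MulAction G X] [TopologicalSpace X]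
    [ContinuousConstSMul G X] {B : Set X} (hB : IsOpen B) (hblock : IsBlock G B)
    (hcover : ∀ x : X, ∃ g : G, g • x ∈ B) : IsClosed B := by
  rw [← isOpen_compl_iff, isOpen_iff_forall_mem_open]
  intro x hx
  obtain ⟨g, hg⟩ := hcover x
  have hxg : x ∈ g⁻¹ • B := Set.mem_inv_smul_set_iff.mpr hg
  have hne : g⁻¹ • B ≠ B := fun heq ↦ hx (heq ▸ hxg)
  exact ⟨g⁻¹ • B, (hblock.disjoint_smul_of_ne hne).subset_compl_right, hB.smul g⁻¹, hxg⟩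

theorem exists_isOpen_disjoint_smul {K X Y : Type*} [Monoid K] [MulAction K X]
    [IsCancelSMul K X] [TopologicalSpace X] {f : X → Y} (hf : IsLocallyInjective f)
    (hinv : ∀ (k : K) (x : X), f (k • x) = f x) (x : X) :
    ∃ U : Set X, IsOpen U ∧ x ∈ U ∧ ∀ k : K, k ≠ 1 → Disjoint (k • U) U := by
  obtain ⟨U, hU, hxU, hinj⟩ := hf x
  refine ⟨U, hU, hxU, fun k hk ↦ Set.disjoint_left.mpr ?_⟩
  rintro _ ⟨u, hu, rfl⟩ hku
  exact hk (IsCancelSMul.eq_one_of_smul (hinj hku hu (hinv k u)))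

theorem isCancelSMul_ker {G H X : Type*} [Group G] [Group H] [MulAction G X] {lam : G →* H}
    (hlam : ∀ x : X, Set.InjOn lam (stabilizer G x)) : IsCancelSMul lam.ker X := by
  refine isCancelSMul_iff_eq_one_of_smul_eq.mpr fun k x hkx ↦ Subtype.ext ?_
  exact hlam x hkx (one_mem (stabilizer G x)) (k.2.trans (map_one lam).symm)

/-- The homeomorphism from the orbit space of an action onto the target of a quotient map whose
fibres are exactly the orbits. -/
noncomputable def orbitQuotientHomeomorph {G X Y : Type*} [Group G] [MulAction G X]
    [TopologicalSpace X] [TopologicalSpace Y] {f : X → Y} (hf : IsQuotientMap f)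
    (hfib : ∀ x x' : X, f x = f x' ↔ x ∈ orbit G x') : Quotient (orbitRel G X) ≃ₜ Y :=
  (Homeomorph.Quotient.congrRight (r' := Setoid.ker f) fun x x' ↦ (hfib x x').symm).trans
    (IsQuotientMap.homeomorph (f := ⟨f, hf.continuous⟩) hf)

@[simp]
theorem orbitQuotientHomeomorph_mk {G X Y : Type*} [Group G] [MulAction G X]
    [TopologicalSpace X] [TopologicalSpace Y] {f : X → Y} (hf : IsQuotientMap f)
    (hfib : ∀ x x' : X, f x = f x' ↔ x ∈ orbit G x') (x : X) :
    orbitQuotientHomeomorph hf hfib (Quotient.mk (orbitRel G X) x) = f x :=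
  rfl

end GroupAction

section Equivariant

open scoped Pointwise

variable {G H M N : Type*} [Group G] [Group H] [MulAction G M] [MulAction H N] {lam : G →* H}
  {φ : M →ₑ[lam] N}

/-- Fullness of the functor of action groupoids `G ⋉ M → H ⋉ N` given by an equivariant map `φ`,
where an arrow `x → x'` of `G ⋉ M` is an element `g : G` with `g • x = x'`. -/
def IsFullEquivariant (φ : M →ₑ[lam] N) : Prop :=
  ∀ ⦃h : H⦄ ⦃x x' : M⦄, h • φ x = φ x' → ∃ g : G, lam g = h ∧ g • x = x'

theorem isFullEquivariant_of_surjOn_stabilizer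
    (hstab : ∀ x : M, Set.SurjOn lam (stabilizer G x) (stabilizer H (φ x)))
    (horb : ∀ x x' : M, φ x' ∈ orbit H (φ x) → x' ∈ orbit G x) : IsFullEquivariant φ := by
  intro h x x' hx
  obtain ⟨g, rfl⟩ := horb x x' ⟨h, hx⟩
  have hfix : (lam g)⁻¹ * h ∈ stabilizer H (φ x) := by
    rw [mem_stabilizer_iff, mul_smul, hx, map_smulₛₗ, inv_smul_smul]
  obtain ⟨s, hs, hlam⟩ := hstab x hfix
  refine ⟨g * s, ?_, ?_⟩
  · rw [map_mul, hlam, mul_inv_cancel_left]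
  · rw [mul_smul, mem_stabilizer_iff.mp hs]

theorem map_ker_smul (φ : M →ₑ[lam] N) (k : lam.ker) (x : M) : φ (k • x) = φ x := by
  rw [Subgroup.smul_def, map_smulₛₗ, lam.mem_ker.mp k.2, one_smul]

namespace IsFullEquivariant

theorem apply_eq_iff_mem_orbit_ker (hφ : IsFullEquivariant φ) (x x' : M) :
    φ x = φ x' ↔ x ∈ orbit lam.ker x' := by
  constructor
  · intro heq
    obtain ⟨k, hk, hkx⟩ := hφ (h := 1) (x := x') (x' := x) (by rw [one_smul, heq])
    exact ⟨⟨k, hk⟩, hkx⟩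
  · rintro ⟨k, rfl⟩
    exact map_ker_smul φ k x'

theorem isBlock_range (hφ : IsFullEquivariant φ) : IsBlock H (Set.range φ) := by
  rw [isBlock_iff_smul_eq_of_mem]
  rintro h _ ⟨x, rfl⟩ ⟨x', hx'⟩
  obtain ⟨g, rfl, -⟩ := hφ hx'.symm
  rw [← Set.image_univ, ← image_smul_setₛₗ, Set.smul_set_univ]

theorem surjective [TopologicalSpace N] [PreconnectedSpace N] [ContinuousConstSMul H N]
    (hφ : IsFullEquivariant φ) (hopen : IsOpen (Set.range φ))
    (horb : ∀ y : N, ∃ x : M, φ x ∈ orbit H y) : Function.Surjective φ := by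
  have hclosed : IsClosed (Set.range φ) :=
    isClosed_of_isOpen_isBlock hopen hφ.isBlock_range fun y ↦
      let ⟨x, h, hx⟩ := horb y
      ⟨h, x, hx.symm⟩
  intro y
  obtain ⟨x, -⟩ := horb y
  have huniv : Set.range φ = Set.univ := IsClopen.eq_univ ⟨hclosed, hopen⟩ ⟨φ x, x, rfl⟩
  exact huniv.ge (Set.mem_univ y)

theorem surjective_monoidHom [Nonempty M] (hφ : IsFullEquivariant φ)
    (hsurj : Function.Surjective φ) : Function.Surjective lam := by
  intro h
  obtain ⟨x⟩ := ‹Nonempty M›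
  obtain ⟨x', hx'⟩ := hsurj (h • φ x)
  obtain ⟨g, hg, -⟩ := hφ hx'.symm
  exact ⟨g, hg⟩

end IsFullEquivariant

end Equivariant

/-- Morita morphisms of action groupoids `G ⋉ M → H ⋉ N`, given by a homomorphism `lam` and a
`lam`-equivariant map `φ`. The last two fields say that the induced map of orbit spaces is
injective and surjective, respectively. -/
structure IsMoritaMorphism {G H M N : Type*} [Group G] [Group H] [TopologicalSpace M]
    [TopologicalSpace N] [MulAction G M] [MulAction H N] (lam : G →* H) (φ : M →ₑ[lam] N) :
    Prop where
  isLocalHomeomorph : IsLocalHomeomorph φ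
  bijOn_stabilizer : ∀ x : M, Set.BijOn lam (stabilizer G x) (stabilizer H (φ x))
  mem_orbit_of_map : ∀ x x' : M, φ x' ∈ orbit H (φ x) → x' ∈ orbit G x
  exists_map_mem_orbit : ∀ y : N, ∃ x : M, φ x ∈ orbit H y

theorem IsMoritaMorphism.isFullEquivariant {G H M N : Type*} [Group G] [Group H]
    [TopologicalSpace M] [TopologicalSpace N] [MulAction G M] [MulAction H N] {lam : G →* H}
    {φ : M →ₑ[lam] N} (hφ : IsMoritaMorphism lam φ) : IsFullEquivariant φ :=
  isFullEquivariant_of_surjOn_stabilizer (fun x ↦ (hφ.bijOn_stabilizer x).surjOn)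
    hφ.mem_orbit_of_map

theorem morita_morphism_characterization_general {G H M N : Type*} [Group G] [Group H]
    [TopologicalSpace M] [TopologicalSpace N] [ConnectedSpace N] [MulAction G M] [MulAction H N]
    [ContinuousConstSMul H N] {lam : G →* H} {φ : M →ₑ[lam] N} (hφ : IsMoritaMorphism lam φ) :
    (∀ k ∈ lam.ker, ∀ x : M, k • x = x → k = 1) ∧
    (∀ x : M, ∃ U : Set M, IsOpen U ∧ x ∈ U ∧
      ∀ k ∈ lam.ker, k ≠ 1 → ((fun u : M ↦ k • u) '' U) ∩ U = ∅) ∧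
    Function.Surjective φ ∧
    ∃ (φbar : Quotient (orbitRel lam.ker M) ≃ₜ N) (lambar : (G ⧸ lam.ker) ≃* H),
      (∀ x : M, φbar (Quotient.mk (orbitRel lam.ker M) x) = φ x) ∧
      (∀ g : G, lambar (QuotientGroup.mk g) = lam g) ∧
      ∀ (g : G) (x : M), φbar (Quotient.mk (orbitRel lam.ker M) (g • x)) =
        lambar (QuotientGroup.mk g) • φbar (Quotient.mk (orbitRel lam.ker M) x) := by
  have hfull := hφ.isFullEquivariant
  have hfree : IsCancelSMul lam.ker M := isCancelSMul_ker fun x ↦ (hφ.bijOn_stabilizer x).injOn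
  have hopen : IsOpenMap φ := hφ.isLocalHomeomorph.isOpenMap
  have hsurj : Function.Surjective φ :=
    hfull.surjective hopen.isOpen_range hφ.exists_map_mem_orbit
  have hquot : IsQuotientMap φ :=
    hopen.isQuotientMap hφ.isLocalHomeomorph.continuous hsurj
  have : Nonempty M := hsurj.nonempty
  refine ⟨fun k hk x hkx ↦ ?_, fun x ↦ ?_, hsurj,
    orbitQuotientHomeomorph hquot hfull.apply_eq_iff_mem_orbit_ker,
    QuotientGroup.quotientKerEquivOfSurjective lam (hfull.surjective_monoidHom hsurj),
    orbitQuotientHomeomorph_mk hquot _, fun _ ↦ rfl, fun g x ↦ map_smulₛₗ φ g x⟩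
  · exact congrArg Subtype.val
      (IsCancelSMul.eq_one_of_smul (g := (⟨k, hk⟩ : lam.ker)) (x := x) hkx)
  · obtain ⟨U, hU, hxU, hdisj⟩ :=
      exists_isOpen_disjoint_smul hφ.isLocalHomeomorph.isLocallyInjective (map_ker_smul φ) x
    exact ⟨U, hU, hxU, fun k hk hk1 ↦
      (hdisj ⟨k, hk⟩ fun h ↦ hk1 (congrArg Subtype.val h)).inter_eq⟩

/-- **Characterization Theorem.**  Let `G`, `H` be groups acting by homeomorphisms on
connected topological manifolds `M`, `N`, and let `(lam, φ)` be a Morita morphism of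
action groupoids `G ⋉ M → H ⋉ N` (an equivariant continuous local homeomorphism
inducing bijections on isotropy groups and on orbit spaces).  Then, with `K = ker lam`:
the restricted `K`-action on `M` is free and properly discontinuous, `φ` is surjective
and descends to a homeomorphism `φ̄ : M/K ≃ₜ N`, `lam` descends to a group isomorphism
`λ̄ : G/K ≃* H`, and `φ̄` is `λ̄`-equivariant.  In other words, every Morita morphism
factors as the quotient projection `G ⋉ M → (G/K) ⋉ (M/K)` followed by an isomorphism
of action groupoids. -/
theorem morita_morphism_characterization
    {G H M N : Type*} [Group G] [Group H]
    [TopologicalSpace M] [TopologicalSpace N]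
    [T2Space M] [T2Space N] [ConnectedSpace M] [ConnectedSpace N]
    {m n : ℕ}
    [ChartedSpace (EuclideanSpace ℝ (Fin m)) M]
    [ChartedSpace (EuclideanSpace ℝ (Fin n)) N]
    [MulAction G M] [MulAction H N]
    (hGcont : ∀ g : G, Continuous fun x : M => g • x)
    (hHcont : ∀ h : H, Continuous fun y : N => h • y)
    (lam : G →* H) (φ : M → N) (hφ : Continuous φ)
    (hequiv : ∀ (g : G) (x : M), φ (g • x) = lam g • φ x)
    (hloc : IsLocalHomeomorph φ)
    (hstab : ∀ x : M, Set.BijOn lam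
      (MulAction.stabilizer G x : Set G) (MulAction.stabilizer H (φ x) : Set H))
    (horb_inj : ∀ x x' : M, φ x' ∈ MulAction.orbit H (φ x) → x' ∈ MulAction.orbit G x)
    (horb_surj : ∀ y : N, ∃ x : M, φ x ∈ MulAction.orbit H y) :
    (∀ k ∈ lam.ker, ∀ x : M, k • x = x → k = 1) ∧
    (∀ x : M, ∃ U : Set M, IsOpen U ∧ x ∈ U ∧
      ∀ k ∈ lam.ker, k ≠ 1 → ((fun u : M => k • u) '' U) ∩ U = ∅) ∧
    Function.Surjective φ ∧
    (∃ (φbar : Quotient (MulAction.orbitRel ↥lam.ker M) ≃ₜ N)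
       (lambar : (G ⧸ lam.ker) ≃* H),
      (∀ x : M, φbar (Quotient.mk (MulAction.orbitRel ↥lam.ker M) x) = φ x) ∧
      (∀ g : G, lambar (QuotientGroup.mk g) = lam g) ∧
      (∀ (g : G) (x : M),
        φbar (Quotient.mk (MulAction.orbitRel ↥lam.ker M) (g • x)) =
          lambar (QuotientGroup.mk g) •
            φbar (Quotient.mk (MulAction.orbitRel ↥lam.ker M) x))) := by
  have : ContinuousConstSMul H N := ⟨hHcont⟩
  exact morita_morphism_characterization_general (φ := ⟨φ, hequiv⟩)
    ⟨hloc, hstab, horb_inj, horb_surj⟩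
end

section
/- Let G and H be groups acting by homeomorphisms on topological spaces M and N with M nonempty and N connected, let λ : G → H be a group homomorphism, and let φ : M → N be a continuous open map with φ(g•x) = λ(g)•φ(x) for all g, x. Assume: (a) every H-orbit in N meets the image φ(M); and (b) whenever z, z' ∈ M and h ∈ H satisfy h•φ(z) = φ(z'), there exists g ∈ G with λ(g) = h. Then φ is surjective. -/
/-!
The translates `h • φ(M)` are open and cover `N`, since every orbit meets `φ(M)`. If `h` carries
some point of `φ(M)` into `φ(M)`, then `h⁻¹` carries it back, so `h` and `h⁻¹` both lie in the image
of `lam`, and by equivariance both map `φ(M)` into itself. Hence two translates are equal or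
disjoint: they partition `N` into open sets, and connectedness leaves room for only one of them.
-/

section Block

open scoped Pointwise
open MulAction

theorem smul_range_subset_range_of_equivariant {G H M N : Type*}
    [SMul G M] [SMul H N] {lam : G → H} {φ : M → N}
    (hequiv : ∀ (g : G) (x : M), φ (g • x) = lam g • φ x) (g : G) :
    lam g • Set.range φ ⊆ Set.range φ := by
  rw [Set.smul_set_range, Set.range_subset_iff]
  exact fun x ↦ ⟨g • x, hequiv g x⟩

variable {H N : Type*} [Group H] [MulAction H N] {B : Set N}

theorem isBlock_of_forall_smul_subset_of_mem
    (hB : ∀ (h : H), ∀ y ∈ B, h • y ∈ B → h • B ⊆ B) : IsBlock H B := by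
  refine isBlock_iff_smul_eq_of_mem.mpr fun h y hy hhy ↦ (hB h y hy hhy).antisymm ?_
  rw [Set.subset_smul_set_iff]
  exact hB h⁻¹ (h • y) hhy (by rwa [inv_smul_smul])

theorem isBlock_range_of_equivariant {G M : Type*} [SMul G M] {lam : G → H} {φ : M → N}
    (hequiv : ∀ (g : G) (x : M), φ (g • x) = lam g • φ x)
    (hful : ∀ (z z' : M) (h : H), h • φ z = φ z' → ∃ g : G, lam g = h) :
    IsBlock H (Set.range φ) := by
  refine isBlock_of_forall_smul_subset_of_mem ?_
  rintro h _ ⟨z, rfl⟩ ⟨z', hz'⟩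
  obtain ⟨g, rfl⟩ := hful z z' h hz'.symm
  exact smul_range_subset_range_of_equivariant hequiv g

variable [TopologicalSpace N] [ContinuousConstSMul H N]

theorem isClosed_of_isOpen_of_isBlock (hopen : IsOpen B) (hB : IsBlock H B)
    (hcover : ∀ y : N, ∃ h : H, h • y ∈ B) : IsClosed B := by
  rw [← isOpen_compl_iff, isOpen_iff_forall_mem_open]
  intro y hy
  obtain ⟨h, hhy⟩ := hcover y
  have hy_mem : y ∈ h⁻¹ • B := Set.mem_inv_smul_set_iff.mpr hhy
  have hne : h⁻¹ • B ≠ B := fun heq ↦ hy (heq ▸ hy_mem)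
  have hdisj : Disjoint (h⁻¹ • B) B := (hB.smul_eq_or_disjoint h⁻¹).resolve_left hne
  exact ⟨h⁻¹ • B, hdisj.subset_compl_right, hopen.smul h⁻¹, hy_mem⟩

theorem eq_univ_of_isOpen_of_isBlock [PreconnectedSpace N] (hopen : IsOpen B) (hB : IsBlock H B)
    (hcover : ∀ y : N, ∃ h : H, h • y ∈ B) : B = Set.univ := by
  have hclopen : IsClopen B := ⟨isClosed_of_isOpen_of_isBlock hopen hB hcover, hopen⟩
  refine Set.eq_univ_of_forall fun y ↦ ?_
  obtain ⟨h, hhy⟩ := hcover y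
  exact hclopen.eq_univ ⟨h • y, hhy⟩ ▸ Set.mem_univ y

end Block

theorem equivariant_open_map_surjective_general
    {G H M N : Type*} [Group H] [TopologicalSpace N] [PreconnectedSpace N]
    [SMul G M] [MulAction H N] [ContinuousConstSMul H N]
    (lam : G → H) (φ : M → N) (hopen : IsOpen (Set.range φ))
    (hequiv : ∀ (g : G) (x : M), φ (g • x) = lam g • φ x)
    (horb : ∀ y : N, ∃ (x : M) (h : H), φ x = h • y)
    (hful : ∀ (z z' : M) (h : H), h • φ z = φ z' → ∃ g : G, lam g = h) :
    Function.Surjective φ := by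
  have hcover : ∀ y : N, ∃ h : H, h • y ∈ Set.range φ := fun y ↦
    let ⟨x, h, hx⟩ := horb y
    ⟨h, x, hx⟩
  have hblock : MulAction.IsBlock H (Set.range φ) := isBlock_range_of_equivariant hequiv hful
  exact Set.range_eq_univ.mp (eq_univ_of_isOpen_of_isBlock hopen hblock hcover)

/-- Let `G`, `H` act by homeomorphisms on spaces `M`, `N`, with `M` nonempty and `N`
connected, let `lam : G → H` be a group homomorphism and `φ : M → N` an equivariant
continuous open map.  If every `H`-orbit in `N` meets the image of `φ`, and whenever
`h • φ z = φ z'` the element `h` lies in the image of `lam`, then `φ` is surjective. -/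
theorem equivariant_open_map_surjective
    {G H M N : Type*} [Group G] [Group H]
    [TopologicalSpace M] [TopologicalSpace N]
    [Nonempty M] [ConnectedSpace N]
    [MulAction G M] [MulAction H N]
    (hGcont : ∀ g : G, Continuous fun x : M => g • x)
    (hHcont : ∀ h : H, Continuous fun y : N => h • y)
    (lam : G →* H) (φ : M → N) (hφ : Continuous φ) (hopen : IsOpenMap φ)
    (hequiv : ∀ (g : G) (x : M), φ (g • x) = lam g • φ x)
    (horb : ∀ y : N, ∃ (x : M) (h : H), φ x = h • y)
    (hful : ∀ (z z' : M) (h : H), h • φ z = φ z' → ∃ g : G, lam g = h) :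
    Function.Surjective φ := by
  have : ContinuousConstSMul H N := ⟨hHcont⟩
  exact equivariant_open_map_surjective_general lam φ hopen.isOpen_range hequiv horb hful
end

section
/- Let M and N be connected topological manifolds, let f : M → M and g : N → N be homeomorphisms, and consider the ℤ-actions n•x = fⁿ(x) on M and n•y = gⁿ(y) on N. Let (λ, φ) be a Morita morphism from ℤ ⋉ M to ℤ ⋉ N. If for some (equivalently, any) basepoint y₀ ∈ N every group homomorphism from the fundamental group π₁(N, y₀) to ℤ is trivial, then λ is either the identity or the negation automorphism of ℤ (λ(1) = 1 or λ(1) = -1), and φ : M → N is a homeomorphism; in particular φ ∘ f = g ∘ φ or φ ∘ f = g⁻¹ ∘ φ. -/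
/-- The group of self-homeomorphisms of a space, with `(f * g) x = f (g x)`. -/
instance homeomorphGroup {E : Type*} [TopologicalSpace E] : Group (E ≃ₜ E) where
  mul f g := g.trans f
  one := Homeomorph.refl E
  inv := Homeomorph.symm
  mul_assoc f g h := by ext x; rfl
  one_mul f := by ext x; rfl
  mul_one f := by ext x; rfl
  inv_mul_cancel f := Homeomorph.self_trans_symm f

/-! Regard `(lam, φ)` as a functor of action groupoids. Compatibility with stabilizers and orbits
makes it full, so `h • range φ` meets `range φ` only when `h` lies in the range of `lam`, in which
case the two coincide. The translates of the open set `range φ` cover `N`, so `range φ` is also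
closed, and connectedness of `N` makes `φ` surjective. Fullness then makes `lam` surjective; a
surjective endomorphism of `ℤ` is `±1`, hence injective, and fullness once more makes `φ`
injective. -/

open Set
open scoped Pointwise

section MulAction

variable {G H M N : Type*} [Group G] [Group H] [MulAction G M] [MulAction H N]
  {lam : G →* H} {φ : M → N}

/-- Fullness of the functor of action groupoids `G ⋉ M ⥤ H ⋉ N` given by `(lam, φ)`: every arrow
`h : φ x ⟶ φ x'` is the image of an arrow `g : x ⟶ x'`. Equivariance of `φ` is not part of the
definition. -/
@[to_additive]
def IsFullMulActionMap (lam : G →* H) (φ : M → N) : Prop :=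
  ∀ ⦃h : H⦄ ⦃x x' : M⦄, h • φ x = φ x' → ∃ g : G, lam g = h ∧ g • x = x'

namespace IsFullMulActionMap

@[to_additive]
theorem of_surjOn_stabilizer (hequiv : ∀ (g : G) (x : M), φ (g • x) = lam g • φ x)
    (hstab : ∀ x : M, SurjOn lam {g | g • x = x} {h | h • φ x = φ x})
    (horb : ∀ x x' : M, (∃ h : H, h • φ x = φ x') → ∃ g : G, g • x = x') :
    IsFullMulActionMap lam φ := by
  intro h x x' hx
  obtain ⟨g, rfl⟩ := horb x x' ⟨h, hx⟩
  have hfix : ((lam g)⁻¹ * h) • φ x = φ x := by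
    rw [mul_smul, hx, hequiv, inv_smul_smul]
  obtain ⟨s, hs : s • x = x, hlam⟩ := hstab x hfix
  exact ⟨g * s, by rw [map_mul, hlam, mul_inv_cancel_left], by rw [mul_smul, hs]⟩

@[to_additive]
theorem injective (hfull : IsFullMulActionMap lam φ) (hlam : Function.Injective lam) :
    Function.Injective φ := by
  intro x x' hx
  obtain ⟨g, hg, rfl⟩ := hfull (show (1 : H) • φ x = φ x' by rw [one_smul, hx])
  rw [(map_eq_one_iff lam hlam).1 hg, one_smul]

@[to_additive]
theorem surjective_hom [Nonempty N] (hfull : IsFullMulActionMap lam φ)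
    (hφ : Function.Surjective φ) : Function.Surjective lam := by
  intro h
  obtain ⟨x, -⟩ := hφ (Classical.arbitrary N)
  obtain ⟨x', hx'⟩ := hφ (h • φ x)
  obtain ⟨g, hg, -⟩ := hfull hx'.symm
  exact ⟨g, hg⟩

variable [TopologicalSpace N] [ContinuousConstSMul H N]

@[to_additive]
theorem isClosed_range (hfull : IsFullMulActionMap lam φ)
    (hequiv : ∀ (g : G) (x : M), φ (g • x) = lam g • φ x)
    (hcover : ∀ y : N, ∃ (x : M) (h : H), h • y = φ x) (hopen : IsOpen (range φ)) :
    IsClosed (range φ) := by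
  rw [← isOpen_compl_iff, isOpen_iff_forall_mem_open]
  intro y hy
  obtain ⟨x, h, hx⟩ := hcover y
  refine ⟨h⁻¹ • range φ, ?_, hopen.smul h⁻¹, mem_inv_smul_set_iff.2 ⟨x, hx.symm⟩⟩
  rintro _ hz ⟨x₁, rfl⟩
  obtain ⟨x₂, hx₂⟩ := mem_inv_smul_set_iff.1 hz
  obtain ⟨g, rfl, -⟩ := hfull hx₂.symm
  refine hy ⟨g⁻¹ • x, ?_⟩
  rw [hequiv, map_inv, ← hx, inv_smul_smul]

@[to_additive]
theorem surjective [PreconnectedSpace N] (hfull : IsFullMulActionMap lam φ)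
    (hequiv : ∀ (g : G) (x : M), φ (g • x) = lam g • φ x)
    (hcover : ∀ y : N, ∃ (x : M) (h : H), h • y = φ x) (hopen : IsOpen (range φ)) :
    Function.Surjective φ := by
  intro y
  obtain ⟨x, -⟩ := hcover y
  have hclopen : IsClopen (range φ) := ⟨hfull.isClosed_range hequiv hcover hopen, hopen⟩
  exact range_eq_univ.1 (hclopen.eq_univ ⟨φ x, x, rfl⟩) y

end IsFullMulActionMap

end MulAction

theorem apply_one_eq_one_or_neg_one_of_surjective {lam : ℤ →+ ℤ}
    (hlam : Function.Surjective lam) : lam 1 = 1 ∨ lam 1 = -1 := by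
  obtain ⟨k, hk⟩ := hlam 1
  have hmul : lam 1 * k = 1 := by
    calc lam 1 * k = k • lam 1 := mul_comm _ _
      _ = lam (k • 1) := (map_zsmul lam k 1).symm
      _ = 1 := by rw [smul_eq_mul, mul_one, hk]
  exact Int.isUnit_iff.1 (IsUnit.of_mul_eq_one k hmul)

section IterateAddAction

variable {E : Type*} [TopologicalSpace E]

/-- The action `k +ᵥ x = (f ^ k) x` of `ℤ` on a space by iterating a self-homeomorphism `f`. It
depends on `f`, so it is introduced locally rather than declared as an instance. -/
abbrev iterateAddAction (f : E ≃ₜ E) : AddAction ℤ E where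
  vadd k x := (f ^ k) x
  zero_vadd _ := rfl
  add_vadd k l x := congrArg (fun e : E ≃ₜ E => e x) (zpow_add f k l)

theorem continuousConstVAdd_iterateAddAction (f : E ≃ₜ E) :
    letI := iterateAddAction f
    ContinuousConstVAdd ℤ E :=
  letI := iterateAddAction f
  ⟨fun k => (f ^ k).continuous⟩

end IterateAddAction

theorem morita_morphism_of_dynamics_H1_trivial_general
    {M N : Type*} [TopologicalSpace M] [TopologicalSpace N] [ConnectedSpace N]
    (f : M ≃ₜ M) (g : N ≃ₜ N)
    (lam : ℤ →+ ℤ) (φ : M → N) (hφ : Continuous φ) (hopen : IsOpenMap φ)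
    (hequiv : ∀ (k : ℤ) (x : M), φ ((f ^ k) x) = (g ^ (lam k)) (φ x))
    (hstab : ∀ x : M, SurjOn lam {k : ℤ | (f ^ k) x = x} {k : ℤ | (g ^ k) (φ x) = φ x})
    (horb_inj : ∀ x x' : M, (∃ k : ℤ, (g ^ k) (φ x) = φ x') → ∃ k : ℤ, (f ^ k) x = x')
    (horb_surj : ∀ y : N, ∃ (x : M) (k : ℤ), (g ^ k) y = φ x) :
    IsHomeomorph φ ∧
      ((lam 1 = 1 ∧ ∀ x : M, φ (f x) = g (φ x)) ∨
       (lam 1 = -1 ∧ ∀ x : M, φ (f x) = g.symm (φ x))) := by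
  let := iterateAddAction f
  let := iterateAddAction g
  have := continuousConstVAdd_iterateAddAction g
  have hfull : IsFullAddActionMap lam φ := .of_surjOn_stabilizer hequiv hstab horb_inj
  have hφ_surj : Function.Surjective φ := hfull.surjective hequiv horb_surj hopen.isOpen_range
  have hlam_surj : Function.Surjective lam := hfull.surjective_hom hφ_surj
  have hlam_inj : Function.Injective lam :=
    OrzechProperty.injective_of_surjective_endomorphism lam.toIntLinearMap hlam_surj
  refine ⟨⟨hφ, hopen, hfull.injective hlam_inj, hφ_surj⟩, ?_⟩
  have hconj (x : M) : φ (f x) = (g ^ lam 1) (φ x) := by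
    simpa only [zpow_one] using hequiv 1 x
  refine (apply_one_eq_one_or_neg_one_of_surjective hlam_surj).imp ?_ ?_ <;>
    refine fun hlam => ⟨hlam, fun x => ?_⟩
  · rw [hconj, hlam, zpow_one]
  · rw [hconj, hlam, zpow_neg_one]
    rfl

/-- Let `f`, `g` be homeomorphisms of connected topological manifolds `M`, `N`, acting
on them by iteration, and let `(lam, φ)` be a Morita morphism of action groupoids
`ℤ ⋉ M → ℤ ⋉ N`.  If every group homomorphism `π₁(N, y₀) → ℤ` is trivial, then `lam` is
either the identity or the negation automorphism of `ℤ`, and `φ` is a homeomorphism; in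
particular `φ ∘ f = g ∘ φ` or `φ ∘ f = g⁻¹ ∘ φ`. -/
theorem morita_morphism_of_dynamics_H1_trivial
    {M N : Type*}
    [TopologicalSpace M] [TopologicalSpace N]
    [T2Space M] [T2Space N] [ConnectedSpace M] [ConnectedSpace N]
    {m n : ℕ}
    [ChartedSpace (EuclideanSpace ℝ (Fin m)) M]
    [ChartedSpace (EuclideanSpace ℝ (Fin n)) N]
    (f : M ≃ₜ M) (g : N ≃ₜ N)
    (lam : ℤ →+ ℤ) (φ : M → N) (hφ : Continuous φ)
    (hequiv : ∀ (k : ℤ) (x : M), φ ((f ^ k) x) = (g ^ (lam k)) (φ x))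
    (hloc : IsLocalHomeomorph φ)
    (hstab : ∀ x : M, Set.BijOn lam
      {k : ℤ | (f ^ k) x = x} {k : ℤ | (g ^ k) (φ x) = φ x})
    (horb_inj : ∀ x x' : M, (∃ k : ℤ, (g ^ k) (φ x) = φ x') → ∃ k : ℤ, (f ^ k) x = x')
    (horb_surj : ∀ y : N, ∃ (x : M) (k : ℤ), (g ^ k) y = φ x)
    (y₀ : N)
    (hH1 : ∀ h : FundamentalGroup N y₀ →* Multiplicative ℤ, h = 1) :
    IsHomeomorph φ ∧
      ((lam 1 = 1 ∧ ∀ x : M, φ (f x) = g (φ x)) ∨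
       (lam 1 = -1 ∧ ∀ x : M, φ (f x) = g.symm (φ x))) := by
  exact morita_morphism_of_dynamics_H1_trivial_general f g lam φ hφ hloc.isOpenMap hequiv
    (fun x => (hstab x).surjOn) horb_inj horb_surj
end

section
/- Let τ₁ and τ₂ be irrational real numbers, and for i = 1, 2 consider the action of ℤ × ℤ on ℝ given by (m,n)•ᵢx = x + m·τᵢ + n. Then the following are equivalent: (i) there exist a group automorphism λ of ℤ × ℤ and a homeomorphism φ : ℝ → ℝ such that φ((m,n)•₁x) = λ(m,n)•₂φ(x) for all m, n ∈ ℤ and x ∈ ℝ; (ii) there exist integers a, b, c, d with a·d − b·c = ±1 such that τ₁ = (a·τ₂ + b)/(c·τ₂ + d). -/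
/-!
A homeomorphism of the line is strictly monotone, so a conjugacy between two actions by translations
preserves or reverses the signs of the displacements. Comparing with rational multiples of a fixed
displacement, as with Dedekind cuts, shows that the two displacement homomorphisms are proportional;
conversely, multiplication by the constant of proportionality conjugates the actions. If `(a, b)`
and `(c, d)` are the images of the generators under the automorphism of `ℤ × ℤ`, proportionality to
the displacements `τ₁` and `1` says `a * τ₂ + b = s * τ₁` and `c * τ₂ + d = s`, that is,
`τ₁ = (a * τ₂ + b) / (c * τ₂ + d)`.
-/

section OrderedField

variable {G K : Type*} [AddGroup G] [Field K] [LinearOrder K] [IsStrictOrderedRing K]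
  [Archimedean K] {ρ₁ ρ₂ : G →+ K}

theorem map_div_map_le_of_forall_pos_imp (h : ∀ g, 0 < ρ₁ g → 0 < ρ₂ g) {g₀ : G}
    (hg₀ : 0 < ρ₁ g₀) (g : G) : ρ₂ g / ρ₂ g₀ ≤ ρ₁ g / ρ₁ g₀ := by
  by_contra! hlt
  obtain ⟨r, hr₁, hr₂⟩ := exists_rat_btwn hlt
  have hden : (0 : K) < r.den := by exact_mod_cast r.den_pos
  rw [Rat.cast_def, div_lt_div_iff₀ hg₀ hden] at hr₁
  rw [Rat.cast_def, div_lt_div_iff₀ hden (h g₀ hg₀)] at hr₂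
  have hpos : 0 < ρ₂ (r.num • g₀ - r.den • g) := h _ <| by
    simp only [map_sub, map_zsmul, map_nsmul, zsmul_eq_mul, nsmul_eq_mul]
    linarith
  simp only [map_sub, map_zsmul, map_nsmul, zsmul_eq_mul, nsmul_eq_mul] at hpos
  linarith

theorem map_div_map_eq_of_forall_pos_imp (h : ∀ g, 0 < ρ₁ g → 0 < ρ₂ g) {g₀ : G}
    (hg₀ : 0 < ρ₁ g₀) (g : G) : ρ₂ g / ρ₂ g₀ = ρ₁ g / ρ₁ g₀ := by
  refine (map_div_map_le_of_forall_pos_imp h hg₀ g).antisymm ?_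
  simpa only [map_neg, neg_div, neg_le_neg_iff] using map_div_map_le_of_forall_pos_imp h hg₀ (-g)

theorem exists_pos_forall_eq_mul_of_forall_pos_iff (h : ∀ g, 0 < ρ₁ g ↔ 0 < ρ₂ g) :
    ∃ s > 0, ∀ g, ρ₂ g = s * ρ₁ g := by
  by_cases hρ : ∃ g₀, 0 < ρ₁ g₀
  · obtain ⟨g₀, hg₀⟩ := hρ
    have hρ₂g₀ := (h g₀).1 hg₀
    refine ⟨ρ₂ g₀ / ρ₁ g₀, div_pos hρ₂g₀ hg₀, fun g ↦ ?_⟩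
    have hratio := map_div_map_eq_of_forall_pos_imp (fun g ↦ (h g).1) hg₀ g
    rw [div_eq_iff hρ₂g₀.ne'] at hratio
    rw [hratio, div_mul_eq_mul_div, div_mul_eq_mul_div, mul_comm]
  · have eq_zero (ρ : G →+ K) (hρ : ∀ g, ¬0 < ρ g) (g : G) : ρ g = 0 :=
      (not_lt.1 (hρ g)).antisymm (by simpa using hρ (-g))
    push Not at hρ
    refine ⟨1, one_pos, fun g ↦ ?_⟩
    rw [eq_zero ρ₁ (fun g ↦ (hρ g).not_gt), eq_zero ρ₂ (fun g ↦ mt (h g).2 (hρ g).not_gt), mul_zero]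

end OrderedField

theorem exists_ne_zero_forall_eq_mul_of_equivariant {G : Type*} [AddGroup G] {ρ₁ ρ₂ : G →+ ℝ}
    {φ : ℝ → ℝ} (hcont : Continuous φ) (hinj : φ.Injective)
    (hφ : ∀ g x, φ (x + ρ₁ g) = φ x + ρ₂ g) : ∃ s ≠ 0, ∀ g, ρ₂ g = s * ρ₁ g := by
  have orbit (g : G) : φ (ρ₁ g) = φ 0 + ρ₂ g := by simpa only [zero_add] using hφ g 0
  rcases hcont.strictMono_of_inj hinj with hmono | hanti
  · obtain ⟨s, hs, hρ⟩ := exists_pos_forall_eq_mul_of_forall_pos_iff (ρ₁ := ρ₁) (ρ₂ := ρ₂)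
      fun g ↦ by rw [← hmono.lt_iff_lt, orbit, lt_add_iff_pos_right]
    exact ⟨s, hs.ne', hρ⟩
  · obtain ⟨s, hs, hρ⟩ := exists_pos_forall_eq_mul_of_forall_pos_iff (ρ₁ := ρ₁) (ρ₂ := -ρ₂)
      fun g ↦ by rw [← hanti.lt_iff_gt, orbit, add_lt_iff_neg_left, AddMonoidHom.neg_apply, neg_pos]
    exact ⟨-s, neg_ne_zero.2 hs.ne', fun g ↦ by rw [neg_mul, ← hρ, AddMonoidHom.neg_apply, neg_neg]⟩

theorem exists_equivariant_homeomorph_iff_exists_eq_mul {G : Type*} [AddGroup G]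
    (ρ₁ ρ₂ : G →+ ℝ) :
    (∃ φ : ℝ ≃ₜ ℝ, ∀ g x, φ (x + ρ₁ g) = φ x + ρ₂ g) ↔ ∃ s ≠ 0, ∀ g, ρ₂ g = s * ρ₁ g := by
  constructor
  · rintro ⟨φ, hφ⟩
    exact exists_ne_zero_forall_eq_mul_of_equivariant φ.continuous φ.injective hφ
  · rintro ⟨s, hs, hρ⟩
    exact ⟨Homeomorph.mulLeft₀ s hs, fun g x ↦ by simp only [Homeomorph.coe_mulLeft₀, mul_add, hρ]⟩

theorem exists_linearEquiv_prod_iff_isUnit_det {R : Type*} [CommRing R] (a b c d : R) :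
    (∃ f : (R × R) ≃ₗ[R] (R × R), f (1, 0) = (a, b) ∧ f (0, 1) = (c, d)) ↔
      IsUnit (a * d - b * c) := by
  let e := Module.Basis.finTwoProd R
  constructor
  · rintro ⟨f, hf₁, hf₂⟩
    have hM : LinearMap.toMatrix e e f = !![a, c; b, d] := by
      ext i j
      fin_cases i <;> fin_cases j <;> simp [e, LinearMap.toMatrix_apply, hf₁, hf₂]
    simpa only [hM, Matrix.det_fin_two_of, mul_comm c b] using f.isUnit_det e e
  · intro hdet
    have hM : IsUnit (!![a, c; b, d]).det := by
      rwa [Matrix.det_fin_two_of, mul_comm c b]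
    refine ⟨Matrix.toLinearEquiv e _ hM, ?_, ?_⟩
    · simp [e, Matrix.toLinearEquiv, Matrix.toLin_finTwoProd]
    · simp [e, Matrix.toLinearEquiv, Matrix.toLin_finTwoProd]

theorem exists_addEquiv_int_prod_iff_det (a b c d : ℤ) :
    (∃ f : (ℤ × ℤ) ≃+ (ℤ × ℤ), f (1, 0) = (a, b) ∧ f (0, 1) = (c, d)) ↔
      a * d - b * c = 1 ∨ a * d - b * c = -1 := by
  rw [← Int.isUnit_iff, ← exists_linearEquiv_prod_iff_isUnit_det]
  exact ⟨fun ⟨f, hf⟩ ↦ ⟨f.toIntLinearEquiv, hf⟩, fun ⟨f, hf⟩ ↦ ⟨f.toAddEquiv, hf⟩⟩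

/-- The displacement homomorphism `(m, n) ↦ m * τ + n` of the lifted rotation by `τ`: the action of
`ℤ × ℤ` on `ℝ` is `(m, n) • x = x + rotationDisplacement τ (m, n)`. -/
def rotationDisplacement (τ : ℝ) : ℤ × ℤ →+ ℝ :=
  ((AddMonoidHom.mulRight τ).comp (Int.castAddHom ℝ)).coprod (Int.castAddHom ℝ)

theorem rotationDisplacement_apply (τ : ℝ) (g : ℤ × ℤ) :
    rotationDisplacement τ g = g.1 * τ + g.2 := rfl

theorem rotationDisplacement_map_eq_mul_iff {τ₁ τ₂ s : ℝ} {f : ℤ × ℤ →+ ℤ × ℤ} {a b c d : ℤ}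
    (hf₁ : f (1, 0) = (a, b)) (hf₂ : f (0, 1) = (c, d)) :
    (∀ g, rotationDisplacement τ₂ (f g) = s * rotationDisplacement τ₁ g) ↔
      a * τ₂ + b = s * τ₁ ∧ c * τ₂ + d = s := by
  constructor
  · intro hf
    constructor
    · simpa [hf₁, rotationDisplacement_apply] using hf (1, 0)
    · simpa [hf₂, rotationDisplacement_apply] using hf (0, 1)
  · rintro ⟨h₁, h₂⟩
    suffices h : (rotationDisplacement τ₂).comp f =
        (AddMonoidHom.mulLeft s).comp (rotationDisplacement τ₁) from DFunLike.congr_fun h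
    apply AddMonoidHom.toIntLinearMap_injective
    ext
    · simp [hf₁, rotationDisplacement_apply, h₁]
    · simp [hf₂, rotationDisplacement_apply, h₂]

theorem exists_equivariant_homeomorph_rotation_iff {τ₁ τ₂ : ℝ} {f : ℤ × ℤ →+ ℤ × ℤ} {a b c d : ℤ}
    (hf₁ : f (1, 0) = (a, b)) (hf₂ : f (0, 1) = (c, d)) :
    (∃ φ : ℝ ≃ₜ ℝ, ∀ (m n : ℤ) (x : ℝ),
      φ (x + m * τ₁ + n) = φ x + (f (m, n)).1 * τ₂ + (f (m, n)).2) ↔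
      (c : ℝ) * τ₂ + d ≠ 0 ∧ τ₁ = (a * τ₂ + b) / (c * τ₂ + d) := by
  have h := exists_equivariant_homeomorph_iff_exists_eq_mul (rotationDisplacement τ₁)
    ((rotationDisplacement τ₂).comp f)
  simp only [AddMonoidHom.comp_apply, rotationDisplacement_map_eq_mul_iff hf₁ hf₂] at h
  simp only [Prod.forall, rotationDisplacement_apply, ← add_assoc] at h
  rw [h]
  constructor
  · rintro ⟨s, hs, h₁, h₂⟩
    rw [h₁, h₂]
    exact ⟨hs, (mul_div_cancel_left₀ τ₁ hs).symm⟩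
  · rintro ⟨hs, hτ⟩
    exact ⟨_, hs, by rw [hτ, mul_div_cancel₀ _ hs], rfl⟩

theorem irrational_rotations_morita_iff_homographic_general (τ₁ τ₂ : ℝ) :
    (∃ (lam : (ℤ × ℤ) ≃+ (ℤ × ℤ)) (φ : ℝ ≃ₜ ℝ),
      ∀ (m n : ℤ) (x : ℝ),
        φ (x + (m : ℝ) * τ₁ + (n : ℝ)) =
          φ x + ((lam (m, n)).1 : ℝ) * τ₂ + ((lam (m, n)).2 : ℝ)) ↔
    (∃ a b c d : ℤ, (a * d - b * c = 1 ∨ a * d - b * c = -1) ∧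
      (c : ℝ) * τ₂ + (d : ℝ) ≠ 0 ∧
      τ₁ = ((a : ℝ) * τ₂ + (b : ℝ)) / ((c : ℝ) * τ₂ + (d : ℝ))) := by
  constructor
  · rintro ⟨lam, hφ⟩
    exact ⟨_, _, _, _, (exists_addEquiv_int_prod_iff_det _ _ _ _).1 ⟨lam, rfl, rfl⟩,
      (exists_equivariant_homeomorph_rotation_iff (f := lam.toAddMonoidHom) rfl rfl).1 hφ⟩
  · rintro ⟨a, b, c, d, hdet, hτ⟩
    obtain ⟨lam, hlam₁, hlam₂⟩ := (exists_addEquiv_int_prod_iff_det a b c d).2 hdet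
    exact ⟨lam, (exists_equivariant_homeomorph_rotation_iff
      (f := lam.toAddMonoidHom) hlam₁ hlam₂).2 hτ⟩

/-- **Geometric Rieffel theorem.**  For irrational `τ₁`, `τ₂`, the lifted actions of the
corresponding irrational rotations, `(m,n)•ᵢx = x + m*τᵢ + n` of `ℤ × ℤ` on `ℝ`, are
isomorphic (by a group automorphism `λ` of `ℤ × ℤ` and a `λ`-equivariant homeomorphism
`φ` of `ℝ`) if and only if `τ₁` and `τ₂` are in the same orbit of the `GL₂(ℤ)`-action by
homographies `τ ↦ (a*τ + b)/(c*τ + d)`. -/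
theorem irrational_rotations_morita_iff_homographic
    (τ₁ τ₂ : ℝ) (h₁ : Irrational τ₁) (h₂ : Irrational τ₂) :
    (∃ (lam : (ℤ × ℤ) ≃+ (ℤ × ℤ)) (φ : ℝ ≃ₜ ℝ),
      ∀ (m n : ℤ) (x : ℝ),
        φ (x + (m : ℝ) * τ₁ + (n : ℝ)) =
          φ x + ((lam (m, n)).1 : ℝ) * τ₂ + ((lam (m, n)).2 : ℝ)) ↔
    (∃ a b c d : ℤ, (a * d - b * c = 1 ∨ a * d - b * c = -1) ∧
      τ₁ = ((a : ℝ) * τ₂ + (b : ℝ)) / ((c : ℝ) * τ₂ + (d : ℝ))) := by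
  exact (irrational_rotations_morita_iff_homographic_general τ₁ τ₂).trans
    ⟨fun ⟨a, b, c, d, hdet, _, hτ⟩ ↦ ⟨a, b, c, d, hdet, hτ⟩, fun ⟨a, b, c, d, hdet, hτ⟩ ↦
      ⟨a, b, c, d, hdet, fun hzero ↦ h₁.ne_zero (by rw [hτ, hzero, div_zero]), hτ⟩⟩
end

section
/- Let τ₁ and τ₂ be irrational real numbers, let a, b, c, d be integers with (c, d) ≠ (0, 0), and let φ : ℝ → ℝ be a continuous map satisfying φ(x + m·τ₁ + n) = φ(x) + m·(a·τ₂ + b) + n·(c·τ₂ + d) for all x ∈ ℝ and all m, n ∈ ℤ. Then c·τ₂ + d ≠ 0 and τ₁ = (a·τ₂ + b)/(c·τ₂ + d). -/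
/-!
Subtracting from a continuous map `φ` with `φ (x + 1) = φ x + B` the linear map `x ↦ x * B` of the
same drift leaves a continuous periodic map, which is bounded. A bounded map has no drift along any
translation, since drift accumulates under iteration; hence `φ (x + τ) = φ x + A` forces
`A = τ * B`.
-/

open Bornology Set
open scoped AddConstMap

section Equivariant

variable {E : Type*} [NormedAddCommGroup E] [NormedSpace ℝ E]

theorem eq_zero_of_isBounded_range_of_map_add_const {G : Type*} [AddMonoid G] {g : G → E}
    {t : G} {v : E} (hbdd : IsBounded (range g)) (hg : ∀ x, g (x + t) = g x + v) : v = 0 := by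
  obtain ⟨C, hC⟩ := hbdd.exists_norm_le
  rw [forall_mem_range] at hC
  have hdrift (n : ℕ) : n • v = g (n • t) - g 0 :=
    eq_sub_of_add_eq' (AddConstMapClass.map_nsmul_const (⟨g, hg⟩ : G →+c[t, v] E) n).symm
  by_contra hv
  obtain ⟨n, hn⟩ := exists_lt_nsmul (norm_pos_iff.mpr hv) (C + C)
  refine hn.not_ge ?_
  calc n • ‖v‖ = ‖g (n • t) - g 0‖ := by rw [← hdrift, RCLike.norm_nsmul ℝ]
    _ ≤ C + C := norm_sub_le_of_le (hC _) (hC _)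

variable {φ : ℝ → E} {p : ℝ} {P : E}

theorem isBounded_range_sub_smul_of_map_add_const (hφ : Continuous φ) (hp : p ≠ 0)
    (hP : ∀ x, φ (x + p) = φ x + P) : IsBounded (range fun x ↦ φ x - (x / p) • P) := by
  have hper : Function.Periodic (fun x ↦ φ x - (x / p) • P) p := fun x ↦ by
    simp only [hP, add_div, div_self hp, add_smul, one_smul, add_sub_add_right_eq_sub]
  exact hper.isBounded_of_continuous hp (by fun_prop)

theorem eq_div_smul_of_map_add_const (hφ : Continuous φ) (hp : p ≠ 0) {q : ℝ} {Q : E}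
    (hP : ∀ x, φ (x + p) = φ x + P) (hQ : ∀ x, φ (x + q) = φ x + Q) : Q = (q / p) • P := by
  refine sub_eq_zero.mp <| eq_zero_of_isBounded_range_of_map_add_const (t := q)
    (isBounded_range_sub_smul_of_map_add_const hφ hp hP) fun x ↦ ?_
  rw [hQ, add_div, add_smul, add_sub_add_comm]

end Equivariant

theorem intCast_mul_add_intCast_ne_zero_of_irrational {x : ℝ} (hx : Irrational x) {c d : ℤ}
    (hcd : (c, d) ≠ (0, 0)) : (c : ℝ) * x + d ≠ 0 := by
  obtain rfl | hc := eq_or_ne c 0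
  · simpa using hcd
  · exact ((hx.intCast_mul hc).add_intCast d).ne_zero

theorem homography_relation_of_equivariant_map_general
    (τ₁ τ₂ : ℝ) (h₂ : Irrational τ₂) (a b c d : ℤ) (hcd : (c, d) ≠ ((0 : ℤ), (0 : ℤ)))
    (φ : ℝ → ℝ) (hφ : Continuous φ)
    (hequiv : ∀ (x : ℝ) (m n : ℤ),
      φ (x + (m : ℝ) * τ₁ + (n : ℝ)) =
        φ x + (m : ℝ) * ((a : ℝ) * τ₂ + (b : ℝ)) + (n : ℝ) * ((c : ℝ) * τ₂ + (d : ℝ))) :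
    (c : ℝ) * τ₂ + (d : ℝ) ≠ 0 ∧
      τ₁ = ((a : ℝ) * τ₂ + (b : ℝ)) / ((c : ℝ) * τ₂ + (d : ℝ)) := by
  have hne : (c : ℝ) * τ₂ + d ≠ 0 := intCast_mul_add_intCast_ne_zero_of_irrational h₂ hcd
  have hone (x : ℝ) : φ (x + 1) = φ x + (c * τ₂ + d) := by simpa using hequiv x 0 1
  have hτ (x : ℝ) : φ (x + τ₁) = φ x + (a * τ₂ + b) := by simpa using hequiv x 1 0
  have hslope : a * τ₂ + b = (τ₁ / 1) • (c * τ₂ + d) :=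
    eq_div_smul_of_map_add_const hφ one_ne_zero hone hτ
  rw [div_one, smul_eq_mul] at hslope
  exact ⟨hne, eq_div_of_mul_eq hne hslope.symm⟩

/-- Key step in the classification of irrational rotations: if `τ₁`, `τ₂` are irrational,
`(c, d) ≠ (0, 0)`, and a continuous `φ : ℝ → ℝ` satisfies
`φ (x + m*τ₁ + n) = φ x + m*(a*τ₂ + b) + n*(c*τ₂ + d)` for all `x ∈ ℝ`, `m n ∈ ℤ`, then
`c*τ₂ + d ≠ 0` and `τ₁ = (a*τ₂ + b)/(c*τ₂ + d)`. -/
theorem homography_relation_of_equivariant_map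
    (τ₁ τ₂ : ℝ) (h₁ : Irrational τ₁) (h₂ : Irrational τ₂)
    (a b c d : ℤ) (hcd : (c, d) ≠ ((0 : ℤ), (0 : ℤ)))
    (φ : ℝ → ℝ) (hφ : Continuous φ)
    (hequiv : ∀ (x : ℝ) (m n : ℤ),
      φ (x + (m : ℝ) * τ₁ + (n : ℝ)) =
        φ x + (m : ℝ) * ((a : ℝ) * τ₂ + (b : ℝ)) + (n : ℝ) * ((c : ℝ) * τ₂ + (d : ℝ))) :
    (c : ℝ) * τ₂ + (d : ℝ) ≠ 0 ∧
      τ₁ = ((a : ℝ) * τ₂ + (b : ℝ)) / ((c : ℝ) * τ₂ + (d : ℝ)) :=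
  homography_relation_of_equivariant_map_general τ₁ τ₂ h₂ a b c d hcd φ hφ hequiv
end
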